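/- In the Černý automaton C_n (n ≥ 3), if a two-element subset S ⊆ Z_n arises as the preimage S = δ_w⁻¹({q}) of some singleton {q} under the map induced by some word w over {a, b}, then S = {i, i+1 mod n} for some i ∈ Z_n, i.e., S is a pair of cyclically adjacent states. -/

import Mathlib

/-- The two-letter alphabet of the Černý automaton. -/
inductive Letter
  | a
  | b
deriving DecidableEq

/-- The action of a letter of the Černý automaton `C_n` on the state set `ZMod n`:
`a` sends `i` to `i + 1 (mod n)`, and `b` sends `n - 1` to `0` and fixes every other state. -/
def step (n : ℕ) : Letter → ZMod n → ZMod n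
  | Letter.a, p => p + 1
  | Letter.b, p => if p = -1 then 0 else p

/-- The map `δ_w` induced by a word `w`, applying letters left to right. -/
def run (n : ℕ) : List Letter → ZMod n → ZMod n
  | [], p => p
  | x :: w, p => run n w (step n x p)

theorem cerny_exit_unique (n : ℕ) (h1 : (1 : ZMod n) ≠ 0) (w : List Letter) (q : ZMod n) :
    ∀ i j : ZMod n, run n w i = q → run n w (i + 1) ≠ q → run n w j = q →
      run n w (j + 1) ≠ q → i = j := by
  induction w with
  | nil =>
    intro i j hi _ hj _
    simp only [run] at hi hj
    rw [hi, hj]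
  | cons x w ih =>
    cases x with
    | a =>
      intro i j hi hi' hj hj'
      simp only [run, step] at hi hi' hj hj'
      exact add_right_cancel (ih _ _ hi hi' hj hj')
    | b =>
      have key : ∀ i : ZMod n, run n (Letter.b :: w) i = q → run n (Letter.b :: w) (i + 1) ≠ q →
          i ≠ -1 ∧ ((run n w i = q ∧ run n w (i + 1) ≠ q) ∨
            (i + 1 = -1 ∧ run n w (-1) = q ∧ run n w (-1 + 1) ≠ q)) := by
        intro i hi hi'
        simp only [run, step] at hi hi'
        have h01 : (0 : ZMod n) ≠ -1 := by
          intro h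
          exact h1 (by linear_combination h)
        by_cases e : i = -1
        · subst e
          simp [h01] at hi hi'
          exact absurd hi hi'
        · refine ⟨e, ?_⟩
          rw [if_neg e] at hi
          by_cases e' : i + 1 = -1
          · rw [if_pos e'] at hi'
            by_cases hq : run n w (-1) = q
            · right
              refine ⟨e', hq, ?_⟩
              rwa [neg_add_cancel]
            · left
              refine ⟨hi, ?_⟩
              rwa [e']
          · rw [if_neg e'] at hi'
            exact Or.inl ⟨hi, hi'⟩
      intro i j hi hi' hj hj'
      obtain ⟨ni, hi⟩ := key i hi hi'
      obtain ⟨nj, hj⟩ := key j hj hj'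
      rcases hi with ⟨a1, a2⟩ | ⟨e1, a1, a2⟩ <;> rcases hj with ⟨b1, b2⟩ | ⟨e2, b1, b2⟩
      · exact ih _ _ a1 a2 b1 b2
      · exact absurd (ih _ _ a1 a2 b1 b2) ni
      · exact absurd (ih _ _ b1 b2 a1 a2) nj
      · exact add_right_cancel (e1.trans e2.symm)

/-- In the Černý automaton `C_n` (`n ≥ 3`), if a two-element subset of `ZMod n` is the
preimage of a singleton under the map induced by some word, then it is a pair of
cyclically adjacent states `{i, i + 1}`. -/
theorem cerny_two_element_preimage_adjacent (n : ℕ) (hn : 3 ≤ n) (w : List Letter)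
    (q : ZMod n) (hcard : {p : ZMod n | run n w p = q}.ncard = 2) :
    ∃ i : ZMod n, {p : ZMod n | run n w p = q} = {i, i + 1} := by
  have h1 : (1 : ZMod n) ≠ 0 := by
    haveI : Fact (1 < n) := ⟨by omega⟩
    exact one_ne_zero
  obtain ⟨x, y, hxy, hS⟩ := Set.ncard_eq_two.mp hcard
  have hm : ∀ p, run n w p = q ↔ p = x ∨ p = y := fun p => by
    have := Set.ext_iff.mp hS p
    simpa using this
  by_cases hx : x + 1 = y
  · exact ⟨x, by rw [hS, hx]⟩
  by_cases hy : y + 1 = x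
  · exact ⟨y, by rw [hS, hy, Set.pair_comm]⟩
  exfalso
  refine hxy (cerny_exit_unique n h1 w q x y ((hm x).2 (Or.inl rfl)) ?_
    ((hm y).2 (Or.inr rfl)) ?_)
  · rw [Ne, hm]
    simp [h1, hx]
  · rw [Ne, hm]
    simp [h1, hy]
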